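/- Let h > 0, let L : ℝⁿ × ℝⁿ → ℝ be C² with Legendre transform 𝔽L(q,v) = (q, D₂L(q,v)) a C¹ diffeomorphism of ℝⁿ × ℝⁿ, set H(q,p) = p·v − L(q,v) with (q,v) = (𝔽L)⁻¹(q,p) and f_H(q,p,u) = f_L((𝔽L)⁻¹(q,p), u) for a continuous f_L : ℝⁿ × ℝⁿ × ℝᵐ → ℝⁿ, and let u : [0,h] → ℝᵐ be continuous. Suppose q : [0,h] → ℝⁿ is a C² solution of the forced Euler–Lagrange equations for (L, f_L, u), belonging to a C² family 𝒬 of such boundary-value solutions as in the definition of the exact discrete Lagrangian, with q(0) = q₀ and q(h) = q₁. Define p₀ := −D₁L_d^E(q₀,q₁) − f_d^{E−}(q₀,q₁) and p₁ := D₂L_d^E(q₀,q₁) + f_d^{E+}(q₀,q₁). Then the curve t ↦ (q(t), p(t)) with p(t) = D₂L(q(t),q̇(t)) solves the forced Hamilton equations q̇ = ∇_p H(q,p), ṗ = −∇_q H(q,p) + f_H(q,p,u) on [0,h] with (q(0),p(0)) = (q₀,p₀) and (q(h),p(h)) = (q₁,p₁); that is, the exact forced discrete Hamiltonian map (q₀,p₀)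 ↦ (q₁,p₁) equals the time-h forced Hamiltonian flow. -/

import Mathlib

open scoped RealInnerProductSpace

noncomputable section

abbrev Evec (n : ℕ) := EuclideanSpace ℝ (Fin n)

/-!
Differentiate the action integral in the parameter of a family of solutions and integrate by parts.
The forced Euler–Lagrange equation turns the bulk term into the virtual work of the force, so the
derivative of the exact discrete Lagrangian plus the exact discrete force is the boundary term
`⟪p, ∂𝒬⟫`. Since `∂𝒬` is the identity at the endpoint being varied and zero at the other one, this
boundary term is the momentum at that endpoint. Hamilton's equations are the envelope theorem: `v`
is a stationary point of `⟪p, v⟫ - L (q, v)`, so the derivative of `v` drops out of that of `H`.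
-/

open Set MeasureTheory Filter Topology InnerProductSpace ContinuousLinearMap
open scoped Gradient

section Calculus

variable {X Y G : Type*} [NormedAddCommGroup X] [NormedSpace ℝ X] [NormedAddCommGroup Y]
  [NormedSpace ℝ Y] [NormedAddCommGroup G] [NormedSpace ℝ G]

theorem fderiv_slice_left {f : X × Y → G} {x : X} {y : Y} (hf : DifferentiableAt ℝ f (x, y)) :
    fderiv ℝ (fun x' => f (x', y)) x = (fderiv ℝ f (x, y)).comp (.inl ℝ X Y) :=
  (hf.hasFDerivAt.comp x (hasFDerivAt_prodMk_left x y)).fderiv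

theorem fderiv_slice_right {f : X × Y → G} {x : X} {y : Y} (hf : DifferentiableAt ℝ f (x, y)) :
    fderiv ℝ (fun y' => f (x, y')) y = (fderiv ℝ f (x, y)).comp (.inr ℝ X Y) :=
  (hf.hasFDerivAt.comp y (hasFDerivAt_prodMk_right x y)).fderiv

theorem deriv_slice_right {f : X × ℝ → G} {x : X} {t : ℝ} (hf : DifferentiableAt ℝ f (x, t)) :
    deriv (fun τ => f (x, τ)) t = fderiv ℝ f (x, t) (0, 1) := by
  rw [← fderiv_apply_one_eq_deriv, fderiv_slice_right hf, comp_apply, inr_apply]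

theorem continuous_fderiv_slice_left {f : X × Y → G} (hf : ContDiff ℝ 1 f) (x : X) :
    Continuous fun y => fderiv ℝ (fun x' => f (x', y)) x :=
  (ContDiff.fderiv (f := fun y x' => f (x', y)) (m := 1) (n := 0) (by fun_prop) contDiff_const
    (by simp)).continuous

theorem contDiff_deriv_slice_right {n : WithTop ℕ∞} {f : X × ℝ → G} (hf : ContDiff ℝ (n + 1) f) :
    ContDiff ℝ n fun z : X × ℝ => deriv (fun τ => f (z.1, τ)) z.2 := by
  have h : ContDiff ℝ n fun z : X × ℝ => fderiv ℝ f z (0, 1) :=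
    (hf.fderiv_right le_rfl).clm_apply contDiff_const
  simpa only [deriv_slice_right (hf.differentiable (by simp) _)] using h

theorem hasDerivAt_fderiv_slice_apply {f : X × ℝ → G} (hf : ContDiff ℝ 2 f) (x d : X) (t : ℝ) :
    HasDerivAt (fun τ => fderiv ℝ (fun x' => f (x', τ)) x d)
      (fderiv ℝ (fun x' => deriv (fun τ => f (x', τ)) t) x d) t := by
  have hdiff : Differentiable ℝ f := hf.differentiable (by simp)
  have hdiff' : Differentiable ℝ (fderiv ℝ f) :=
    (hf.fderiv_right (m := 1) le_rfl).differentiable one_ne_zero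
  have hspace : fderiv ℝ (fun x' => deriv (fun τ => f (x', τ)) t) x d
      = fderiv ℝ (fderiv ℝ f) (x, t) (d, 0) (0, 1) := by
    simp only [deriv_slice_right (hdiff _)]
    rw [fderiv_slice_left (f := fun z => fderiv ℝ f z (0, 1)) (by fun_prop),
      fderiv_clm_apply (hdiff' _) (by fun_prop)]
    simp
  have htime : HasDerivAt (fun τ => fderiv ℝ f (x, τ) (d, 0))
      (fderiv ℝ (fderiv ℝ f) (x, t) (0, 1) (d, 0)) t := by
    have hcomp := (hdiff' (x, t)).hasFDerivAt.comp_hasDerivAt t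
      ((hasDerivAt_const t x).prodMk (hasDerivAt_id t))
    simpa using hcomp.clm_apply (hasDerivAt_const t ((d, 0) : X × ℝ))
  have hsymm : IsSymmSndFDerivAt ℝ f (x, t) := hf.contDiffAt.isSymmSndFDerivAt (by simp)
  simp only [fderiv_slice_left (hdiff _), hspace, comp_apply, inl_apply]
  exact hsymm (d, 0) (0, 1) ▸ htime

theorem contDiff_comp_slice_deriv {n : WithTop ℕ∞} {L : Y × Y → G} {Q : X × ℝ → Y}
    (hL : ContDiff ℝ n L) (hQ : ContDiff ℝ (n + 1) Q) :
    ContDiff ℝ n fun z : X × ℝ => L (Q z, deriv (fun τ => Q (z.1, τ)) z.2) :=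
  hL.comp ((hQ.of_le le_self_add).prodMk (contDiff_deriv_slice_right hQ))

theorem fderiv_comp_slice_deriv_apply {L : Y × Y → G} {Q : X × ℝ → Y}
    (hL : Differentiable ℝ L) (hQ : ContDiff ℝ 2 Q) (x d : X) (t : ℝ) :
    fderiv ℝ (fun x' => L (Q (x', t), deriv (fun τ => Q (x', τ)) t)) x d
      = fderiv ℝ L (Q (x, t), deriv (fun τ => Q (x, τ)) t) (fderiv ℝ (fun x' => Q (x', t)) x d,
          fderiv ℝ (fun x' => deriv (fun τ => Q (x', τ)) t) x d) := by
  have hpos : DifferentiableAt ℝ (fun x' => Q (x', t)) x :=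
    (hQ.comp (contDiff_prodMk_left t)).differentiable two_ne_zero x
  have hvel : DifferentiableAt ℝ (fun x' => deriv (fun τ => Q (x', τ)) t) x :=
    ((contDiff_deriv_slice_right (n := 1) hQ).comp
      (contDiff_prodMk_left t)).differentiable one_ne_zero x
  exact congrArg (· d) ((hL _).hasFDerivAt.comp x
    (hpos.hasFDerivAt.prodMk hvel.hasFDerivAt)).fderiv

theorem hasFDerivAt_intervalIntegral_of_contDiff {f : X × ℝ → G} (hf : ContDiff ℝ 1 f)
    (a b : ℝ) (x : X) :
    HasFDerivAt (fun x' => ∫ t in a..b, f (x', t))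
      (∫ t in a..b, fderiv ℝ (fun x' => f (x', t)) x) x := by
  have hdiff : Differentiable ℝ f := hf.differentiable one_ne_zero
  have hcont : Continuous fun z : X × ℝ => fderiv ℝ (fun x' => f (x', z.2)) z.1 := by
    simp only [fderiv_slice_left (hdiff _)]
    exact (hf.continuous_fderiv one_ne_zero).clm_comp continuous_const
  obtain ⟨C, hC⟩ := isCompact_uIcc (a := a) (b := b) |>.exists_bound_of_continuousOn
    (continuous_fderiv_slice_left hf x).continuousOn
  have hbound : ∀ᶠ x' in 𝓝 x, ∀ t ∈ uIcc a b, ‖fderiv ℝ (fun y => f (y, t)) x'‖ < C + 1 :=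
    isCompact_uIcc.eventually_forall_of_forall_eventually fun t ht =>
      hcont.norm.continuousAt.eventually_lt continuousAt_const ((hC t ht).trans_lt (lt_add_one C))
  refine intervalIntegral.hasFDerivAt_integral_of_dominated_of_fderiv_le
    (F := fun x' t => f (x', t)) (F' := fun x' t => fderiv ℝ (fun y => f (y, t)) x')
    (bound := fun _ => C + 1) hbound (.of_forall fun x' => ?_) ?_ ?_
    (.of_forall fun t ht x' hx' => (hx' t (uIoc_subset_uIcc ht)).le) intervalIntegrable_const
    (.of_forall fun t _ x' _ => ?_)
  · exact (hf.continuous.comp (.prodMk_right x')).aestronglyMeasurable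
  · exact (hf.continuous.comp (.prodMk_right x)).intervalIntegrable a b
  · exact (continuous_fderiv_slice_left hf x).aestronglyMeasurable
  · exact (by fun_prop : DifferentiableAt ℝ (fun y => f (y, t)) x').hasFDerivAt

theorem continuousOn_along_curve {Z : Type*} [TopologicalSpace Z]
    {F : ℝ → Y × Y → Z} {s : Set ℝ} {q : ℝ → Y}
    (hF : ContinuousOn (fun z : ℝ × Y × Y => F z.1 z.2) (s ×ˢ univ)) (hq : ContDiff ℝ 1 q) :
    ContinuousOn (fun t => F t (q t, deriv q t)) s :=
  hF.comp (continuous_id.prodMk (hq.continuous.prodMk (hq.continuous_deriv le_rfl))).continuousOn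
    fun _ ht => ⟨ht, mem_univ _⟩

end Calculus

section Gradients

variable {E F : Type*} [NormedAddCommGroup E] [InnerProductSpace ℝ E] [CompleteSpace E]
  [NormedAddCommGroup F] [InnerProductSpace ℝ F] [CompleteSpace F]

theorem inner_gradient_slice_left {Y : Type*} [NormedAddCommGroup Y] [NormedSpace ℝ Y]
    {f : E × Y → ℝ} {x : E} {y : Y} (hf : DifferentiableAt ℝ f (x, y)) (d : E) :
    ⟪∇ (fun x' => f (x', y)) x, d⟫ = fderiv ℝ f (x, y) (d, 0) := by
  rw [inner_gradient_left, fderiv_slice_left hf, comp_apply, inl_apply]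

theorem inner_gradient_slice_right {X : Type*} [NormedAddCommGroup X] [NormedSpace ℝ X]
    {f : X × E → ℝ} {x : X} {y : E} (hf : DifferentiableAt ℝ f (x, y)) (d : E) :
    ⟪∇ (fun y' => f (x, y')) y, d⟫ = fderiv ℝ f (x, y) (0, d) := by
  rw [inner_gradient_left, fderiv_slice_right hf, comp_apply, inr_apply]

theorem contDiff_toDual_symm {n : WithTop ℕ∞} : ContDiff ℝ n (toDual ℝ E).symm :=
  IsBoundedLinearMap.contDiff
    { map_add := map_add _
      map_smul := fun c ℓ => by simp
      bound := ⟨1, one_pos, fun ℓ => by simp⟩ }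

theorem inner_intervalIntegral_adjoint {a b : ℝ} {T : ℝ → E →L[ℝ] F} {g : ℝ → F}
    (hT : ContinuousOn T (uIcc a b)) (hg : ContinuousOn g (uIcc a b)) (d : E) :
    ⟪∫ t in a..b, (adjoint (T t)) (g t), d⟫ = ∫ t in a..b, ⟪g t, T t d⟫ := by
  have hint : IntervalIntegrable (fun t => (adjoint (T t)) (g t)) volume a b :=
    ((adjoint.continuous.comp_continuousOn hT).clm_apply hg).intervalIntegrable
  calc ⟪∫ t in a..b, (adjoint (T t)) (g t), d⟫
      = ∫ t in a..b, ⟪d, (adjoint (T t)) (g t)⟫ := by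
        rw [real_inner_comm]
        exact ((innerSL ℝ d).intervalIntegral_comp_comm hint).symm
    _ = ∫ t in a..b, ⟪g t, T t d⟫ := by
        simp only [adjoint_inner_right, real_inner_comm]

end Gradients

theorem equiv_symm_apply_fst {α β γ : Type*} {e : α × β ≃ α × γ} (he : ∀ x, (e x).1 = x.1)
    (y : α × γ) : (e.symm y).1 = y.1 := by
  rw [← he, Equiv.apply_symm_apply]

section LagrangianMechanics

variable {E X : Type*} [NormedAddCommGroup E] [InnerProductSpace ℝ E] [CompleteSpace E]

/-- The momentum `p = D₂L(q, q̇)` along a curve `q`, i.e. the second component of the Legendre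
transform of `(q, q̇)`. -/
def momentum (L : E × E → ℝ) (q : ℝ → E) (t : ℝ) : E :=
  ∇ (fun v => L (q t, v)) (deriv q t)

/-- The forced Euler–Lagrange equations for the Lagrangian `L` on the time set `s`. The force is an
arbitrary function of time and state; a controlled force is `F t (q, v) = f (q, v, u t)`. -/
def IsForcedEulerLagrangeOn (L : E × E → ℝ) (F : ℝ → E × E → E) (q : ℝ → E) (s : Set ℝ) : Prop :=
  ∀ t ∈ s, ∇ (fun y => L (y, deriv q t)) (q t) - deriv (momentum L q) t + F t (q t, deriv q t) = 0

/-- The forced Hamilton equations for the Hamiltonian `H` on the time set `s`, with a force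
depending on time and on the phase point `(q, p)`. -/
def IsForcedHamiltonOn (H : E × E → ℝ) (F : ℝ → E × E → E) (q p : ℝ → E) (s : Set ℝ) : Prop :=
  ∀ t ∈ s, deriv q t = ∇ (fun p' => H (q t, p')) (p t) ∧
    deriv p t = -∇ (fun q' => H (q', p t)) (q t) + F t (q t, p t)

/-- The Hamiltonian `H(q, p) = ⟪p, v⟫ - L(q, v)`, where the velocity `v = v(q, p)` is the second
component of the inverse Legendre transform. -/
def hamiltonian (L : E × E → ℝ) (v : E × E → E) (y : E × E) : ℝ :=
  ⟪y.2, v y⟫ - L (y.1, v y)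

/-- The action `∫ L(q, q̇) dt` over the time interval from `a` to `b`, as a function of the
parameter of a family `Q` of curves. When the parameter is the pair of endpoints of a solution, this
is the exact discrete Lagrangian. -/
def action (L : E × E → ℝ) (Q : X × ℝ → E) (a b : ℝ) (x : X) : ℝ :=
  ∫ t in a..b, L (Q (x, t), deriv (fun τ => Q (x, τ)) t)

/-- The force integrated along the curve `Q (x, ·)` after being pulled back to the parameter space,
`∫ (∂Q/∂x)ᵀ F dt`. When `x` is the initial or the final point of a solution with the other endpoint
held fixed, this is the exact discrete force `f_d^{E−}` or `f_d^{E+}`. -/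
def integratedForce [NormedAddCommGroup X] [InnerProductSpace ℝ X] [CompleteSpace X]
    (Q : X × ℝ → E) (F : ℝ → E × E → E) (a b : ℝ) (x : X) : X :=
  ∫ t in a..b, (adjoint (fderiv ℝ (fun x' => Q (x', t)) x))
    (F t (Q (x, t), deriv (fun τ => Q (x, τ)) t))

section Momentum

variable {L : E × E → ℝ} {F : ℝ → E × E → E} {q : ℝ → E} {s : Set ℝ}

theorem differentiable_momentum (hL : ContDiff ℝ 2 L) (hq : ContDiff ℝ 2 q) :
    Differentiable ℝ (momentum L q) := by
  have hq' : ContDiff ℝ 1 (deriv q) := (contDiff_succ_iff_deriv.1 hq).2.2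
  have hfderiv : ContDiff ℝ 1 fun t => fderiv ℝ (fun v => L (q t, v)) (deriv q t) :=
    ContDiff.fderiv (f := fun t v => L (q t, v)) (m := 2) (by fun_prop) hq' le_rfl
  exact (contDiff_toDual_symm.comp hfderiv).differentiable one_ne_zero

theorem IsForcedEulerLagrangeOn.deriv_momentum {t : ℝ} (hEL : IsForcedEulerLagrangeOn L F q s)
    (ht : t ∈ s) :
    deriv (momentum L q) t = ∇ (fun y => L (y, deriv q t)) (q t) + F t (q t, deriv q t) := by
  rw [← sub_eq_zero, ← neg_eq_zero, ← hEL t ht]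
  abel

theorem hasDerivAt_inner_momentum (hL : ContDiff ℝ 2 L)
    (hq : ContDiff ℝ 2 q) (hEL : IsForcedEulerLagrangeOn L F q s) {η : ℝ → E} {η' : E} {t : ℝ}
    (ht : t ∈ s) (hη : HasDerivAt η η' t) :
    HasDerivAt (fun τ => ⟪momentum L q τ, η τ⟫)
      (fderiv ℝ L (q t, deriv q t) (η t, η') + ⟪F t (q t, deriv q t), η t⟫) t := by
  have hLdiff : DifferentiableAt ℝ L (q t, deriv q t) := hL.differentiable two_ne_zero _
  refine ((differentiable_momentum hL hq t).hasDerivAt.inner ℝ hη).congr_deriv ?_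
  rw [hEL.deriv_momentum ht, inner_add_left, inner_gradient_slice_left hLdiff, momentum,
    inner_gradient_slice_right hLdiff, ← add_assoc, ← map_add, Prod.mk_add_mk, zero_add, add_zero]

end Momentum

section Action

variable {L : E × E → ℝ} {F : ℝ → E × E → E} {a b : ℝ}

theorem fderiv_action_apply [NormedAddCommGroup X] [NormedSpace ℝ X] {Q : X × ℝ → E} {x : X}
    (hL : ContDiff ℝ 2 L) (hQ : ContDiff ℝ 2 Q)
    (hF : ContinuousOn (fun t => F t (Q (x, t), deriv (fun τ => Q (x, τ)) t)) (uIcc a b))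
    (hEL : IsForcedEulerLagrangeOn L F (fun t => Q (x, t)) (uIcc a b)) (d : X) :
    fderiv ℝ (action L Q a b) x d
      = ⟪momentum L (fun t => Q (x, t)) b, fderiv ℝ (fun x' => Q (x', b)) x d⟫
        - ⟪momentum L (fun t => Q (x, t)) a, fderiv ℝ (fun x' => Q (x', a)) x d⟫
        - ∫ t in a..b, ⟪F t (Q (x, t), deriv (fun τ => Q (x, τ)) t),
            fderiv ℝ (fun x' => Q (x', t)) x d⟫ := by
  have hintegrand : ContDiff ℝ 1 fun z : X × ℝ => L (Q z, deriv (fun τ => Q (z.1, τ)) z.2) :=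
    contDiff_comp_slice_deriv (hL.of_le one_le_two) hQ
  have haction : HasFDerivAt (action L Q a b) _ x :=
    hasFDerivAt_intervalIntegral_of_contDiff hintegrand a b x
  have hcont := continuous_fderiv_slice_left hintegrand x
  have hvariation : IntervalIntegrable
      (fun t => fderiv ℝ (fun x' => L (Q (x', t), deriv (fun τ => Q (x', τ)) t)) x d) volume a b :=
    (hcont.clm_apply continuous_const).intervalIntegrable a b
  have hwork : IntervalIntegrable (fun t => ⟪F t (Q (x, t), deriv (fun τ => Q (x, τ)) t),
      fderiv ℝ (fun x' => Q (x', t)) x d⟫) volume a b :=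
    (hF.inner ((continuous_fderiv_slice_left (hQ.of_le one_le_two) x).clm_apply
      continuous_const).continuousOn).intervalIntegrable
  have hboundary := intervalIntegral.integral_eq_sub_of_hasDerivAt
    (fun t ht => fderiv_comp_slice_deriv_apply (hL.differentiable two_ne_zero) hQ x d t ▸
      hasDerivAt_inner_momentum hL (hQ.comp (contDiff_prodMk_right x)) hEL ht
        (hasDerivAt_fderiv_slice_apply hQ x d t))
    (hvariation.add hwork)
  rw [haction.fderiv, intervalIntegral_apply (hcont.intervalIntegrable a b), eq_sub_iff_add_eq,
    ← intervalIntegral.integral_add hvariation hwork]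
  exact hboundary

theorem gradient_action [NormedAddCommGroup X] [InnerProductSpace ℝ X] [CompleteSpace X]
    {Q : X × ℝ → E} {x : X} (hL : ContDiff ℝ 2 L) (hQ : ContDiff ℝ 2 Q)
    (hF : ContinuousOn (fun t => F t (Q (x, t), deriv (fun τ => Q (x, τ)) t)) (uIcc a b))
    (hEL : IsForcedEulerLagrangeOn L F (fun t => Q (x, t)) (uIcc a b)) :
    ∇ (action L Q a b) x
      = (adjoint (fderiv ℝ (fun x' => Q (x', b)) x)) (momentum L (fun t => Q (x, t)) b)
        - (adjoint (fderiv ℝ (fun x' => Q (x', a)) x)) (momentum L (fun t => Q (x, t)) a)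
        - integratedForce Q F a b x := by
  refine ext_inner_right ℝ fun d => ?_
  have hQcont := continuous_fderiv_slice_left (hQ.of_le one_le_two) x
  rw [inner_gradient_left, fderiv_action_apply hL hQ hF hEL, inner_sub_left, inner_sub_left,
    adjoint_inner_left, adjoint_inner_left, integratedForce,
    inner_intervalIntegral_adjoint hQcont.continuousOn hF]

end Action

section Endpoints

variable {L : E × E → ℝ} {F : ℝ → E × E → E} {a b : ℝ} {Q : E × ℝ → E} {x c : E}

theorem momentum_eq_of_start_eq_id (hL : ContDiff ℝ 2 L) (hQ : ContDiff ℝ 2 Q)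
    (hF : ContinuousOn (fun t => F t (Q (x, t), deriv (fun τ => Q (x, τ)) t)) (uIcc a b))
    (hEL : IsForcedEulerLagrangeOn L F (fun t => Q (x, t)) (uIcc a b))
    (hQa : (fun y => Q (y, a)) =ᶠ[𝓝 x] id) (hQb : (fun y => Q (y, b)) =ᶠ[𝓝 x] fun _ => c) :
    momentum L (fun t => Q (x, t)) a = -∇ (action L Q a b) x - integratedForce Q F a b x := by
  rw [gradient_action hL hQ hF hEL, hQa.fderiv_eq, hQb.fderiv_eq, fderiv_id, fderiv_const_apply,
    adjoint_id]
  simp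

theorem momentum_eq_of_end_eq_id (hL : ContDiff ℝ 2 L) (hQ : ContDiff ℝ 2 Q)
    (hF : ContinuousOn (fun t => F t (Q (x, t), deriv (fun τ => Q (x, τ)) t)) (uIcc a b))
    (hEL : IsForcedEulerLagrangeOn L F (fun t => Q (x, t)) (uIcc a b))
    (hQa : (fun y => Q (y, a)) =ᶠ[𝓝 x] fun _ => c) (hQb : (fun y => Q (y, b)) =ᶠ[𝓝 x] id) :
    momentum L (fun t => Q (x, t)) b = ∇ (action L Q a b) x + integratedForce Q F a b x := by
  rw [gradient_action hL hQ hF hEL, hQa.fderiv_eq, hQb.fderiv_eq, fderiv_id, fderiv_const_apply,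
    adjoint_id]
  simp

end Endpoints

section Hamiltonian

variable {L : E × E → ℝ} {v : E × E → E}

theorem hasFDerivAt_hamiltonian {y : E × E} (hL : DifferentiableAt ℝ L (y.1, v y))
    (hv : DifferentiableAt ℝ v y) (hstationary : ∇ (fun w => L (y.1, w)) (v y) = y.2) :
    HasFDerivAt (hamiltonian L v)
      ((innerSL ℝ (v y)).comp (.snd ℝ E E)
        - (fderiv ℝ L (y.1, v y)).comp ((ContinuousLinearMap.fst ℝ E E).prod 0)) y := by
  have hpairing := (hasFDerivAt_snd (𝕜 := ℝ) (p := y)).inner ℝ hv.hasFDerivAt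
  have hlagrangian := hL.hasFDerivAt.comp y
    ((hasFDerivAt_fst (𝕜 := ℝ) (p := y)).prodMk hv.hasFDerivAt)
  refine (hpairing.sub hlagrangian).congr_fderiv (ext fun d => ?_)
  have hsplit : fderiv ℝ L (y.1, v y) (d.1, fderiv ℝ v y d)
      = fderiv ℝ L (y.1, v y) (d.1, 0) + ⟪y.2, fderiv ℝ v y d⟫ := by
    rw [← hstationary, inner_gradient_slice_right hL, ← map_add, Prod.mk_add_mk, add_zero, zero_add]
  change ⟪y.2, fderiv ℝ v y d⟫ + ⟪d.2, v y⟫ - fderiv ℝ L (y.1, v y) (d.1, fderiv ℝ v y d)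
    = ⟪v y, d.2⟫ - fderiv ℝ L (y.1, v y) (d.1, 0)
  rw [hsplit, real_inner_comm d.2]
  ring

theorem gradient_hamiltonian_snd {q w p : E} (hL : DifferentiableAt ℝ L (q, w))
    (hv : DifferentiableAt ℝ v (q, p)) (hw : v (q, p) = w)
    (hp : ∇ (fun w' => L (q, w')) w = p) :
    ∇ (fun p' => hamiltonian L v (q, p')) p = w := by
  subst hw
  have hH := hasFDerivAt_hamiltonian hL hv hp
  refine ext_inner_right ℝ fun d => ?_
  rw [inner_gradient_slice_right hH.differentiableAt, hH.fderiv]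
  simp [Prod.mk_zero_zero]

theorem gradient_hamiltonian_fst {q w p : E} (hL : DifferentiableAt ℝ L (q, w))
    (hv : DifferentiableAt ℝ v (q, p)) (hw : v (q, p) = w)
    (hp : ∇ (fun w' => L (q, w')) w = p) :
    ∇ (fun q' => hamiltonian L v (q', p)) q = -∇ (fun q' => L (q', w)) q := by
  subst hw
  have hH := hasFDerivAt_hamiltonian hL hv hp
  refine ext_inner_right ℝ fun d => ?_
  rw [inner_gradient_slice_left hH.differentiableAt, hH.fderiv, inner_neg_left,
    inner_gradient_slice_left hL]
  simp

theorem IsForcedEulerLagrangeOn.isForcedHamiltonOn {F : ℝ → E × E → E} {q : ℝ → E} {s : Set ℝ}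
    (hEL : IsForcedEulerLagrangeOn L F q s) (hL : Differentiable ℝ L) (hv : Differentiable ℝ v)
    (hvq : ∀ t ∈ s, v (q t, momentum L q t) = deriv q t) :
    IsForcedHamiltonOn (hamiltonian L v) (fun t y => F t (y.1, v y)) q (momentum L q) s := by
  intro t ht
  refine ⟨(gradient_hamiltonian_snd (hL _) (hv _) (hvq t ht) rfl).symm, ?_⟩
  beta_reduce
  rw [gradient_hamiltonian_fst (hL _) (hv _) (hvq t ht) rfl, hvq t ht, neg_neg,
    hEL.deriv_momentum ht]

end Hamiltonian

theorem stmt_9_general {L H : E × E → ℝ} {FL : E × E ≃ E × E} {F FH : ℝ → E × E → E} {a b : ℝ}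
    {Q : (E × E) × ℝ → E} {x : E × E} {q p : ℝ → E} (hL : ContDiff ℝ 2 L)
    (hFL : ∀ y, FL y = (y.1, ∇ (fun w => L (y.1, w)) y.2)) (hFLsymm : Differentiable ℝ FL.symm)
    (hH : ∀ y, H y = ⟪y.2, (FL.symm y).2⟫ - L (FL.symm y))
    (hF : ContinuousOn (fun z : ℝ × E × E => F z.1 z.2) (uIcc a b ×ˢ univ))
    (hFH : ∀ t y, FH t y = F t (FL.symm y)) (hQ : ContDiff ℝ 2 Q)
    (hQa : ∀ᶠ y in 𝓝 x, Q (y, a) = y.1) (hQb : ∀ᶠ y in 𝓝 x, Q (y, b) = y.2)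
    (hq : q = fun t => Q (x, t)) (hp : p = momentum L q)
    (hEL : IsForcedEulerLagrangeOn L F q (uIcc a b)) :
    IsForcedHamiltonOn H FH q p (uIcc a b)
      ∧ q a = x.1
      ∧ p a = -∇ (fun y => action L Q a b (y, x.2)) x.1
          - integratedForce (fun z : E × ℝ => Q ((z.1, x.2), z.2)) F a b x.1
      ∧ q b = x.2
      ∧ p b = ∇ (fun y => action L Q a b (x.1, y)) x.2
          + integratedForce (fun z : E × ℝ => Q ((x.1, z.1), z.2)) F a b x.2 := by
  subst hp hq
  have hsymm : ∀ y, FL.symm y = (y.1, (FL.symm y).2) := fun y =>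
    Prod.ext (equiv_symm_apply_fst (fun x => by rw [hFL]) y) rfl
  have hvL : ∀ y w, (FL.symm (y, ∇ (fun w' => L (y, w')) w)).2 = w := fun y w => by
    rw [← hFL (y, w), Equiv.symm_apply_apply]
  obtain rfl : H = hamiltonian L fun y => (FL.symm y).2 := funext fun y => by
    rw [hH, hamiltonian, ← hsymm]
  obtain rfl : FH = fun t y => F t (y.1, (FL.symm y).2) := funext₂ fun t y => by
    rw [hFH, ← hsymm]
  have hforce : ContinuousOn (fun t => F t (Q (x, t), deriv (fun τ => Q (x, τ)) t)) (uIcc a b) :=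
    continuousOn_along_curve hF (hQ.comp (contDiff_prodMk_right x) |>.of_le one_le_two)
  have hstart : Tendsto (fun y => (y, x.2)) (𝓝 x.1) (𝓝 x) := (Continuous.prodMk_left x.2).tendsto _
  have hend : Tendsto (fun y => (x.1, y)) (𝓝 x.2) (𝓝 x) := (Continuous.prodMk_right x.1).tendsto _
  have hpa := momentum_eq_of_start_eq_id (Q := fun z : E × ℝ => Q ((z.1, x.2), z.2)) (x := x.1)
    (c := x.2) hL (hQ.comp (by fun_prop)) hforce hEL (hstart.eventually hQa) (hstart.eventually hQb)
  have hpb := momentum_eq_of_end_eq_id (Q := fun z : E × ℝ => Q ((x.1, z.1), z.2)) (x := x.2)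
    (c := x.1) hL (hQ.comp (by fun_prop)) hforce hEL (hend.eventually hQa) (hend.eventually hQb)
  exact ⟨hEL.isForcedHamiltonOn (hL.differentiable two_ne_zero) hFLsymm.snd fun t _ => hvL _ _,
    hQa.self_of_nhds, hpa, hQb.self_of_nhds, hpb⟩

end LagrangianMechanics

/-- The exact forced discrete Hamiltonian map `(q₀,p₀) ↦ (q₁,p₁)` generated by
the exact discrete Lagrangian and exact discrete forces equals the time-`h`
forced Hamiltonian flow. -/
theorem stmt_9 {n m : ℕ} (h : ℝ) (hh : 0 < h)
    (L : Evec n × Evec n → ℝ) (hL : ContDiff ℝ 2 L)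
    (FL : (Evec n × Evec n) ≃ (Evec n × Evec n))
    (hFL : ∀ x : Evec n × Evec n, FL x = (x.1, gradient (fun v => L (x.1, v)) x.2))
    (hFLdiff : ContDiff ℝ 1 (⇑FL)) (hFLinvdiff : ContDiff ℝ 1 (⇑FL.symm))
    (H : Evec n × Evec n → ℝ)
    (hH : ∀ x : Evec n × Evec n, H x = ⟪x.2, (FL.symm x).2⟫ - L (FL.symm x))
    (fL : Evec n × Evec n × Evec m → Evec n) (hfL : Continuous fL)
    (fH : Evec n × Evec n × Evec m → Evec n)
    (hfH : ∀ (x : Evec n × Evec n) (w : Evec m),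
      fH (x.1, x.2, w) = fL ((FL.symm x).1, (FL.symm x).2, w))
    (u : ℝ → Evec m) (hu : Continuous u)
    (V : Set (Evec n × Evec n)) (hV : IsOpen V)
    (Qf : (Evec n × Evec n) × ℝ → Evec n) (hQf : ContDiff ℝ 2 Qf)
    (hbd0 : ∀ x ∈ V, Qf (x, 0) = x.1)
    (hbdh : ∀ x ∈ V, Qf (x, h) = x.2)
    (hEL : ∀ x ∈ V, ∀ t ∈ Set.Icc (0:ℝ) h,
      gradient (fun y => L (y, deriv (fun τ => Qf (x, τ)) t)) (Qf (x, t))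
        - deriv (fun σ => gradient (fun v => L (Qf (x, σ), v))
            (deriv (fun τ => Qf (x, τ)) σ)) t
        + fL (Qf (x, t), deriv (fun τ => Qf (x, τ)) t, u t) = 0)
    (LdE : Evec n × Evec n → ℝ)
    (hLdE : ∀ x, LdE x = ∫ t in (0:ℝ)..h, L (Qf (x, t), deriv (fun τ => Qf (x, τ)) t))
    (fdEm : Evec n × Evec n → Evec n)
    (hfdEm : ∀ x : Evec n × Evec n, fdEm x = ∫ t in (0:ℝ)..h,
      (ContinuousLinearMap.adjoint (fderiv ℝ (fun a => Qf ((a, x.2), t)) x.1))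
        (fL (Qf (x, t), deriv (fun τ => Qf (x, τ)) t, u t)))
    (fdEp : Evec n × Evec n → Evec n)
    (hfdEp : ∀ x : Evec n × Evec n, fdEp x = ∫ t in (0:ℝ)..h,
      (ContinuousLinearMap.adjoint (fderiv ℝ (fun b => Qf ((x.1, b), t)) x.2))
        (fL (Qf (x, t), deriv (fun τ => Qf (x, τ)) t, u t)))
    (x0 : Evec n × Evec n) (hx0 : x0 ∈ V)
    (q : ℝ → Evec n) (hqdef : q = fun t => Qf (x0, t))
    (p : ℝ → Evec n)
    (hpdef : ∀ t, p t = gradient (fun v => L (q t, v)) (deriv q t))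
    (pa pb : Evec n)
    (hpa : pa = -gradient (fun a => LdE (a, x0.2)) x0.1 - fdEm x0)
    (hpb : pb = gradient (fun b => LdE (x0.1, b)) x0.2 + fdEp x0) :
    (∀ t ∈ Set.Icc (0:ℝ) h,
      deriv q t = gradient (fun p' => H (q t, p')) (p t)
      ∧ deriv p t = -gradient (fun q' => H (q', p t)) (q t) + fH (q t, p t, u t))
    ∧ q 0 = x0.1 ∧ p 0 = pa ∧ q h = x0.2 ∧ p h = pb := by
  subst hpa hpb
  obtain rfl : LdE = action L Qf 0 h := funext hLdE
  rw [← uIcc_of_le hh.le] at hEL ⊢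
  rw [hfdEm, hfdEp]
  have hVx : V ∈ 𝓝 x0 := hV.mem_nhds hx0
  exact stmt_9_general (F := fun t y => fL (y.1, y.2, u t)) (FH := fun t y => fH (y.1, y.2, u t))
    hL hFL (hFLinvdiff.differentiable one_ne_zero) hH (by fun_prop) (fun t y => hfH y (u t)) hQf
    (mem_of_superset hVx hbd0) (mem_of_superset hVx hbdh) hqdef (funext hpdef)
    (hqdef ▸ hEL x0 hx0)
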